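/- For all integers b ≥ 1 and c ≥ 1, the polynomials Q satisfy the q-difference equation E35: −w·z·(q^{4c}−1)·Q_{b+1,c−1}(x,y,z,w) − Q_{b,c}(x,y,z,q²w) − w·(q^{2b}−1)·q^{4c}·(q^{4(b+c−1)} − x·y²·z)·Q_{b−1,c}(x,y,z,w) + Q_{b,c}(x,y,z,w) = 0. -/

import Mathlib

noncomputable section

open MvPolynomial

/-- The field `K = ℚ(q)` of rational functions in `q` over `ℚ`. -/
abbrev K : Type := RatFunc ℚ

/-- The variable `q ∈ K = ℚ(q)`. -/
def q : K := RatFunc.X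

/-- The polynomial ring `K[x,y,z,w]`. -/
abbrev P4 : Type := MvPolynomial (Fin 4) K

def xP : P4 := X 0
def yP : P4 := X 1
def zP : P4 := X 2
def wP : P4 := X 3

/-- The `K`-algebra map `K[x,y,z,w] → K[x,y,z,w]` rescaling the variables:
`x ↦ q^a·x`, `y ↦ q^b·y`, `z ↦ q^c·z`, `w ↦ q^d·w`. -/
def scl (a b c d : ℤ) : P4 →ₐ[K] P4 :=
  aeval ![C (q ^ a) * X 0, C (q ^ b) * X 1, C (q ^ c) * X 2, C (q ^ d) * X 3]

/-- The polynomials `Q_{b,0}(x,y,z,w)`, defined by the recursion (rec1) of the paper. -/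
def Qb0 : ℕ → P4
  | 0 => 1
  | b + 1 =>
      C (q ^ (4 * (b : ℤ))) * wP * yP * (zP - 1) * scl 0 0 (-4) 0 (Qb0 b)
    + C (q ^ (4 * (b : ℤ))) * wP * xP * (yP - 1) * yP * zP * scl 0 (-2) 0 0 (Qb0 b)
    + C (q ^ (6 * (b : ℤ))) * (wP - 1) * (yP - 1) * scl 0 (-2) 0 (-2) (Qb0 b)
    + C (q ^ (4 * (b : ℤ))) * wP * (xP - 1) * yP * (zP - 1) * scl (-4) 2 (-4) 0 (Qb0 b)
    + C (q ^ (6 * (b : ℤ))) * (wP - 1) * (xP - 1) * yP * scl (-4) 0 0 (-2) (Qb0 b)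

/-- The polynomials `Q_{b,c}(x,y,z,w)`: for `c ≥ 1` they are defined by the
recursion (rec2) of the paper, lowering `c`; for `c = 0` by `Qb0`. -/
def Q : ℕ → ℕ → P4
  | b, 0 => Qb0 b
  | b, c + 1 =>
      - (C (q ^ (4 * (b : ℤ) + 8 * (c : ℤ))) * wP ^ 2 * yP * (zP - 1) * zP)
          * scl 0 0 (-4) 0 (Q b c)
    + (C (q ^ (4 * (b : ℤ) + 4 * (c : ℤ) - 2)) * wP * xP * (yP - 1) * zP)
          * (C (q ^ (2 * (b : ℤ) + 4 * (c : ℤ) + 4)) - C (q ^ (2 : ℤ)) * wP * yP * zP)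
          * scl 0 (-2) 0 0 (Q b c)
    - (C (q ^ (6 * (b : ℤ) + 8 * (c : ℤ))) * (wP - 1) * wP * (yP - 1) * zP)
          * scl 0 (-2) 0 (-2) (Q b c)
    + (C (q ^ (4 * (b : ℤ) + 8 * (c : ℤ) - 2)) * wP * (xP - 1) * (zP - 1))
          * (C (q ^ (2 * (b : ℤ) + 4 * (c : ℤ) + 4)) - C (q ^ (2 : ℤ)) * wP * yP * zP)
          * scl (-4) 2 (-4) 0 (Q b c)
    + (C (q ^ (6 * (b : ℤ) + 8 * (c : ℤ) - 2)) * (wP - 1) * (xP - 1))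
          * (C (q ^ (2 * (b : ℤ) + 4 * (c : ℤ) + 4)) - C (q ^ (2 : ℤ)) * wP * yP * zP)
          * scl (-4) 0 0 (-2) (Q b c)


/-!
With `β = q^(2b)` and `γ = q^(4c)`, the recursions (rec1) and (rec2) shift all four variables and do
not visibly commute. But `Q_{b,c}` also satisfies two `q`-difference equations which express the
operators shifting `z` through those that do not, and which propagate along the recursions. Modulo
these equations both recursions turn into operators (`reducedRaiseB`, `reducedRaiseC`) that shift
only `x`, `y` and `w`, and these commute up to the expected change of `β` and `γ`, so (rec1) holds
in reduced form for every `c`. Comparing the reduced operators with the substitution `w ↦ q²w`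
gives E35 by induction, first on `c` for `b = 0` and then on `b`. The computations close up because
the monomial `x y² z` commutes with all the operators involved up to a power of `q`.
-/

local notation "ω" => scl 0 0 0 (-2)

section Scaling

lemma q_ne_zero : q ≠ 0 := RatFunc.X_ne_zero

lemma C_q_mul_C_q_inv : (C q * C q⁻¹ : P4) = 1 := by
  rw [← C_mul, mul_inv_cancel₀ q_ne_zero, C_1]

@[simp] lemma scl_xP (a b c d : ℤ) : scl a b c d xP = C (q ^ a) * xP := by simp [scl, xP]

@[simp] lemma scl_yP (a b c d : ℤ) : scl a b c d yP = C (q ^ b) * yP := by simp [scl, yP]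

@[simp] lemma scl_zP (a b c d : ℤ) : scl a b c d zP = C (q ^ c) * zP := by simp [scl, zP]

@[simp] lemma scl_wP (a b c d : ℤ) : scl a b c d wP = C (q ^ d) * wP := by simp [scl, wP]

@[simp] lemma scl_C (a b c d : ℤ) (k : K) : scl a b c d (C k) = C k :=
  (scl a b c d).commutes k

@[simp] lemma scl_scl (a b c d a' b' c' d' : ℤ) (f : P4) :
    scl a b c d (scl a' b' c' d' f) = scl (a + a') (b + b') (c + c') (d + d') f := by
  have h : (scl a b c d).comp (scl a' b' c' d') = scl (a + a') (b + b') (c + c') (d + d') := by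
    ext i : 1
    fin_cases i <;> simp [scl, zpow_add₀ q_ne_zero, mul_assoc, mul_left_comm]
  exact DFunLike.congr_fun h f

@[simp] lemma scl_zero (f : P4) : scl 0 0 0 0 f = f := by
  have h : scl 0 0 0 0 = AlgHom.id K P4 := by
    ext i : 1
    fin_cases i <;> simp [scl]
  exact DFunLike.congr_fun h f

end Scaling

section Operators

/-- The monomial `x y² z`, which commutes with the operators below up to a power of `q`. -/
def pP : P4 := xP * yP ^ 2 * zP

/-- The operator `f ↦ (x - 1) f(q⁻⁴x, y, z, w)`. -/
def opX : P4 →ₗ[K] P4 :=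
  LinearMap.mulLeft K (xP - 1) ∘ₗ (scl (-4) 0 0 0).toLinearMap

/-- The operator `f ↦ (y - 1) f(x, q⁻²y, z, w) + (x - 1) y f(q⁻⁴x, y, z, w)`: up to a scalar and
the shift of `w`, the coefficient of `w - 1` in (rec1). -/
def opV : P4 →ₗ[K] P4 :=
  LinearMap.mulLeft K (yP - 1) ∘ₗ (scl 0 (-2) 0 0).toLinearMap + LinearMap.mulLeft K yP ∘ₗ opX

/-- The operator `f ↦ x (y - 1) z f(x, q⁻²y, z, w) + γ (x - 1) (z - 1) f(q⁻⁴x, q²y, q⁻⁴z, w)`.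
In (rec2) it occurs with `γ = q^(4c)`. -/
def opE (γ : K) : P4 →ₗ[K] P4 :=
  LinearMap.mulLeft K (xP * (yP - 1) * zP) ∘ₗ (scl 0 (-2) 0 0).toLinearMap
    + LinearMap.mulLeft K (C γ * (xP - 1) * (zP - 1)) ∘ₗ (scl (-4) 2 (-4) 0).toLinearMap

/-- The operator `f ↦ γ y (z - 1) f(x, y, q⁻⁴z, w) + y (opE γ f)`: for `γ = 1`, up to a scalar, the
coefficient of `w` in (rec1). -/
def opD (γ : K) : P4 →ₗ[K] P4 :=
  LinearMap.mulLeft K (C γ * yP * (zP - 1)) ∘ₗ (scl 0 0 (-4) 0).toLinearMap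
    + LinearMap.mulLeft K yP ∘ₗ opE γ

lemma opX_apply (f : P4) : opX f = (xP - 1) * scl (-4) 0 0 0 f := rfl

lemma opV_apply (f : P4) : opV f = (yP - 1) * scl 0 (-2) 0 0 f + yP * opX f := rfl

lemma opE_apply (γ : K) (f : P4) :
    opE γ f = xP * (yP - 1) * zP * scl 0 (-2) 0 0 f
      + C γ * (xP - 1) * (zP - 1) * scl (-4) 2 (-4) 0 f := rfl

lemma opD_apply (γ : K) (f : P4) :
    opD γ f = C γ * yP * (zP - 1) * scl 0 0 (-4) 0 f + yP * opE γ f := rfl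

variable (γ : K) (f : P4)

lemma map_C_mul (L : P4 →ₗ[K] P4) (k : K) : L (C k * f) = C k * L f := by
  rw [← smul_eq_C_mul, ← smul_eq_C_mul, map_smul]

lemma opV_opX : opV (opX f) = opX (opV f) := by
  simp only [opX_apply, opV_apply, map_mul, map_sub, scl_xP, zpow_ofNat, pow_zero, one_mul,
    map_one, scl_scl, zero_add, add_zero, zpow_neg, Int.reduceAdd, map_add, scl_yP]
  ring

lemma opE_opX : opE (q ^ 4 * γ) (opX f) = C (q ^ 4) * opX (opE γ f) := by
  simp only [opX_apply, opE_apply, map_mul, map_sub, scl_xP, zpow_ofNat, pow_zero, one_mul,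
    map_one, scl_scl, zero_add, add_zero, C_pow, zpow_neg, ← inv_pow, Int.reduceAdd, map_add,
    scl_yP, scl_zP, scl_C]
  grind [C_q_mul_C_q_inv]

lemma opD_opX : opD (q ^ 4 * γ) (opX f) = C (q ^ 4) * opX (opD γ f) := by
  simp only [opX_apply, opD_apply, C_pow, map_mul, map_sub, scl_xP, zpow_ofNat, pow_zero, one_mul,
    map_one, scl_scl, zero_add, add_zero, opE_apply, zpow_neg, ← inv_pow, Int.reduceAdd, map_add,
    scl_C, scl_yP, scl_zP]
  grind [C_q_mul_C_q_inv]

lemma opE_opV : opE γ (opV f) = opV (opE γ f) + C (q ^ 2 - 1) * opX (opD γ f) := by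
  simp only [opV_apply, opX_apply, opE_apply, map_add, map_mul, map_sub, scl_yP, zpow_neg,
    zpow_ofNat, ← inv_pow, C_pow, map_one, scl_scl, add_zero, Int.reduceAdd, scl_xP, pow_zero,
    one_mul, zero_add, add_neg_cancel, scl_zP, scl_C, neg_add_cancel, opD_apply]
  grind [C_q_mul_C_q_inv]

lemma opD_opV : opD γ (opV f) = C (q ^ 2) * opV (opD γ f) := by
  simp only [opV_apply, opX_apply, opD_apply, map_add, map_mul, map_sub, scl_yP, zpow_ofNat,
    pow_zero, one_mul, map_one, scl_scl, add_zero, zero_add, scl_xP, opE_apply, zpow_neg,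
    ← inv_pow, C_pow, Int.reduceAdd, add_neg_cancel, scl_C, scl_zP, neg_add_cancel]
  grind [C_q_mul_C_q_inv]

lemma opX_wP_mul : opX (wP * f) = wP * opX f := by
  simp [opX_apply, mul_left_comm]

lemma opV_wP_mul : opV (wP * f) = wP * opV f := by
  simp [opV_apply, opX_wP_mul, mul_left_comm, mul_add]

lemma opE_wP_mul : opE γ (wP * f) = wP * opE γ f := by
  simp [opE_apply, mul_left_comm, mul_add]

lemma opD_wP_mul : opD γ (wP * f) = wP * opD γ f := by
  simp [opD_apply, opE_wP_mul, mul_left_comm, mul_add]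

lemma opX_zP_mul : opX (zP * f) = zP * opX f := by
  simp [opX_apply, mul_left_comm]

lemma opV_zP_mul : opV (zP * f) = zP * opV f := by
  simp [opV_apply, opX_zP_mul, mul_left_comm, mul_add]

lemma opE_zP_mul : opE (q ^ 4 * γ) (zP * f) = zP * opE γ f := by
  simp only [opE_apply, map_mul, scl_zP, zpow_ofNat, pow_zero, C_1, one_mul, C_pow, zpow_neg,
    ← inv_pow]
  grind [C_q_mul_C_q_inv]

lemma opD_zP_mul : opD (q ^ 4 * γ) (zP * f) = zP * opD γ f := by
  simp only [opD_apply, C_pow, map_mul, scl_zP, zpow_neg, zpow_ofNat, ← inv_pow, opE_zP_mul]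
  grind [C_q_mul_C_q_inv]

lemma opX_pP_mul : opX (pP * f) = C (q⁻¹ ^ 4) * (pP * opX f) := by
  simp only [pP, opX_apply, map_mul, scl_xP, zpow_neg, zpow_ofNat, ← inv_pow, map_pow, scl_yP,
    pow_zero, C_1, one_mul, scl_zP]
  ring

lemma opV_pP_mul : opV (pP * f) = C (q⁻¹ ^ 4) * (pP * opV f) := by
  simp only [pP, opV_apply, map_mul, scl_xP, zpow_ofNat, pow_zero, C_1, one_mul, map_pow, scl_yP,
    zpow_neg, ← inv_pow, scl_zP, opX_apply]
  ring

lemma opE_pP_mul : opE γ (pP * f) = C (q⁻¹ ^ 4) * (pP * opE γ f) := by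
  simp only [pP, opE_apply, map_mul, scl_xP, zpow_ofNat, pow_zero, C_1, one_mul, map_pow, scl_yP,
    zpow_neg, ← inv_pow, scl_zP]
  grind [C_q_mul_C_q_inv]

lemma opD_pP_mul : opD γ (pP * f) = C (q⁻¹ ^ 4) * (pP * opD γ f) := by
  simp only [opD_apply, opE_pP_mul]
  simp only [pP, map_mul, scl_xP, zpow_ofNat, pow_zero, C_1, one_mul, map_pow, scl_yP, scl_zP,
    zpow_neg, ← inv_pow]
  ring

variable (d : ℤ)

lemma scl_pP : scl 0 0 0 d pP = pP := by simp [pP]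

lemma scl_opX : scl 0 0 0 d (opX f) = opX (scl 0 0 0 d f) := by simp [opX_apply]

lemma scl_opV : scl 0 0 0 d (opV f) = opV (scl 0 0 0 d f) := by simp [opV_apply, scl_opX]

lemma scl_opE : scl 0 0 0 d (opE γ f) = opE γ (scl 0 0 0 d f) := by simp [opE_apply]

lemma scl_opD : scl 0 0 0 d (opD γ f) = opD γ (scl 0 0 0 d f) := by simp [opD_apply, scl_opE]

end Operators

section Recursions

/-- The right-hand side of (rec1) as an operator applied to `Q_{b,c}`, with `β = q^(2b)` and
`γ = q^(4c)`. The paper has `γ = 1`; general `γ` enters through `raiseC`. -/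
def raiseB (β γ : K) (f : P4) : P4 :=
  C (γ * β ^ 2) * (wP * opD γ f + C (β * γ) * (wP - 1) * opV (ω f))

/-- The right-hand side of (rec2), raising `c`, with `β = q^(2b)` and `γ = q^(4c)`. -/
def raiseC (β γ : K) (f : P4) : P4 :=
  C (q ^ 2 * β ^ 3 * γ ^ 2) * (wP * opE γ f + C (β * γ) * (wP - 1) * opX (ω f))
    - wP * zP * raiseB β γ f

/-- The form without shifts of `z` that `raiseB` takes on solutions of `SatisfiesReduction`. -/
def reducedRaiseB (β γ : K) (f : P4) : P4 :=
  C (β * γ) * (wP * (pP - C (γ * β ^ 2)) * ω f - C (γ * β ^ 2) * opV (ω f))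

/-- The form without shifts of `z` that `raiseC` takes on solutions of `SatisfiesReduction`. -/
def reducedRaiseC (β γ : K) (f : P4) : P4 :=
  C (q ^ 2 * β ^ 3 * γ ^ 2) * (wP * zP * opV f - C (β * γ) * opX f)
    - wP * zP * reducedRaiseB β γ f

/-- The two `q`-difference equations, with `β = q^(2b)` and `γ = q^(4c)`, that express the
operators shifting `z` through those that do not. They hold for `f = Q_{b,c}`. -/
structure SatisfiesReduction (β γ : K) (f : P4) : Prop where
  opD_eq : C β * opD γ f = (pP - C (γ * β ^ 2)) * ω f - C (γ * β ^ 2) * opV (ω f)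
  opE_eq : wP * opE γ f =
    wP * zP * opV f - C (β * γ) * opX f - C (β * γ) * (wP - 1) * opX (ω f)

lemma satisfiesReduction_one : SatisfiesReduction 1 1 1 where
  opD_eq := by
    simp only [opD_apply, one_mul, map_one, mul_one, opE_apply, pP, one_pow, opV_apply, opX_apply]
    ring
  opE_eq := by
    simp only [opE_apply, map_one, mul_one, one_mul, opV_apply, opX_apply]
    ring

namespace SatisfiesReduction

variable {β γ : K} {f : P4}

lemma raiseB_eq (h : SatisfiesReduction β γ f) : raiseB β γ f = reducedRaiseB β γ f := by
  have hD := congrArg (C (γ * β) * wP * ·) h.opD_eq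
  simp only [raiseB, reducedRaiseB, C_mul, C_pow] at hD ⊢
  linear_combination hD

lemma raiseC_eq (h : SatisfiesReduction β γ f) : raiseC β γ f = reducedRaiseC β γ f := by
  rw [raiseC, reducedRaiseC, h.raiseB_eq]
  linear_combination C (q ^ 2 * β ^ 3 * γ ^ 2) * h.opE_eq

/-
The coefficients below are those of `reducedRaiseB` and `reducedRaiseC` applied to the equations for
`f`, altered by the powers of `q` that the commutation relations produce. The remaining identity is
polynomial in the values of the operators, with `q * q⁻¹ = 1` as the only relation.
-/
lemma map_reducedRaiseB (h : SatisfiesReduction β γ f) :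
    SatisfiesReduction (q ^ 2 * β) γ (reducedRaiseB β γ f) where
  opD_eq := by
    linear_combination (norm := (
        simp only [reducedRaiseB, Function.comp_apply, mul_sub, sub_mul, mul_assoc, map_sub,
          map_mul, map_C_mul, opV_wP_mul, opD_wP_mul, opV_pP_mul, opD_pP_mul, opD_opV, scl_wP,
          scl_C, scl_pP, scl_opV, scl_opD]
        simp only [zpow_neg, zpow_ofNat, ← inv_pow, C_mul, C_pow]
        grind [C_q_mul_C_q_inv]))
      C (q ^ 2 * β * γ) * wP * (C (q⁻¹ ^ 4) * pP - C (γ * β ^ 2)) * congrArg ω h.opD_eq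
        - C (q ^ 4 * β ^ 3 * γ ^ 2) * congrArg (opV ∘ ω) h.opD_eq
  opE_eq := by
    linear_combination (norm := (
        simp only [reducedRaiseB, Function.comp_apply, mul_add, mul_sub, sub_mul, mul_assoc,
          one_mul, map_sub, map_mul, map_one, map_C_mul, opX_wP_mul, opV_wP_mul, opE_wP_mul,
          opV_zP_mul, opX_pP_mul, opV_pP_mul, opE_pP_mul, opV_opX, opE_opV, scl_wP, scl_zP, scl_C,
          scl_pP, scl_opX, scl_opV, scl_opE, scl_opD]
        simp only [zpow_neg, zpow_ofNat, ← inv_pow, C_pow]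
        grind [C_q_mul_C_q_inv]))
      C (q ^ 2 * β * γ) * wP * (C (q⁻¹ ^ 4) * pP - C (γ * β ^ 2)) * congrArg ω h.opE_eq
        - C (q ^ 2 * β ^ 3 * γ ^ 2) * congrArg (opV ∘ ω) h.opE_eq
        - C (β ^ 2 * γ ^ 2 * (q ^ 2 - 1)) * wP * congrArg (opX ∘ ω) h.opD_eq

lemma map_reducedRaiseC (h : SatisfiesReduction β γ f) :
    SatisfiesReduction β (q ^ 4 * γ) (reducedRaiseC β γ f) where
  opD_eq := by
    linear_combination (norm := (
        simp only [reducedRaiseC, reducedRaiseB, mul_sub, sub_mul, mul_assoc, map_sub, map_mul,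
          map_C_mul, opV_wP_mul, opD_wP_mul, opV_zP_mul, opD_zP_mul, opX_pP_mul, opV_pP_mul,
          opD_pP_mul, opV_opX, opD_opX, opD_opV, scl_wP, scl_zP, scl_C, scl_pP, scl_opX, scl_opV]
        simp only [zpow_neg, zpow_ofNat, ← inv_pow, C_mul, C_pow]
        grind [C_q_mul_C_q_inv]))
      C (q ^ 4 * β ^ 3 * γ ^ 2) * wP * zP * congrArg opV h.opD_eq
        - C (q ^ 6 * β ^ 4 * γ ^ 3) * congrArg opX h.opD_eq
        - C (q⁻¹ ^ 2) * wP * zP * h.map_reducedRaiseB.opD_eq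
  opE_eq := by
    linear_combination (norm := (
        simp only [reducedRaiseC, reducedRaiseB, mul_add, mul_sub, sub_mul, mul_assoc, one_mul,
          map_sub, map_mul, map_one, map_C_mul, opX_wP_mul, opV_wP_mul, opE_wP_mul, opX_zP_mul,
          opV_zP_mul, opE_zP_mul, opX_pP_mul, opV_pP_mul, opE_pP_mul, opV_opX, opE_opX, opE_opV,
          scl_wP, scl_zP, scl_C, scl_pP, scl_opX, scl_opV]
        simp only [zpow_neg, zpow_ofNat, ← inv_pow, C_pow]
        grind [C_q_mul_C_q_inv]))
      C (q ^ 2 * β ^ 3 * γ ^ 2) * wP * zP * congrArg opV h.opE_eq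
        + C (q ^ 2 * β ^ 2 * γ ^ 2 * (q ^ 2 - 1)) * wP ^ 2 * zP * congrArg opX h.opD_eq
        - C (q ^ 6 * β ^ 4 * γ ^ 3) * congrArg opX h.opE_eq
        - wP * zP * h.map_reducedRaiseB.opE_eq

end SatisfiesReduction

lemma reducedRaiseB_reducedRaiseC (β γ : K) (f : P4) :
    reducedRaiseB β (q ^ 4 * γ) (reducedRaiseC β γ f) =
      reducedRaiseC (q ^ 2 * β) γ (reducedRaiseB β γ f) := by
  simp only [reducedRaiseC, reducedRaiseB, mul_sub, sub_mul, mul_assoc, map_sub, map_mul,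
    map_C_mul, opX_wP_mul, opV_wP_mul, opV_zP_mul, opX_pP_mul, opV_pP_mul, opV_opX, scl_wP,
    scl_zP, scl_C, scl_pP, scl_opX, scl_opV]
  simp only [zpow_neg, zpow_ofNat, ← inv_pow, C_mul, C_pow]
  grind [C_q_mul_C_q_inv]

end Recursions

section Shift

variable (β γ : K) (f : P4)

lemma reducedRaiseB_zero : reducedRaiseB β γ 0 = 0 := by simp [reducedRaiseB]

lemma reducedRaiseB_add (g : P4) :
    reducedRaiseB β γ (f + g) = reducedRaiseB β γ f + reducedRaiseB β γ g := by
  simp only [reducedRaiseB, map_add]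
  ring

lemma reducedRaiseB_C_mul (k : K) :
    reducedRaiseB β γ (C k * f) = C k * reducedRaiseB β γ f := by
  simp only [reducedRaiseB, map_mul, scl_C, map_C_mul]
  ring

lemma reducedRaiseB_wP_mul_zP_mul :
    reducedRaiseB β (q ^ 4 * γ) (wP * (zP * f)) =
      wP * (zP * reducedRaiseB (q ^ 2 * β) γ f) := by
  simp only [reducedRaiseB, mul_assoc, map_mul, scl_wP, scl_zP, map_C_mul, opV_wP_mul, opV_zP_mul]
  simp only [zpow_neg, zpow_ofNat, ← inv_pow, C_mul, C_pow]
  grind [C_q_mul_C_q_inv]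

lemma reducedRaiseB_wP_mul_sub_pP_mul :
    reducedRaiseB (q ^ 2 * β) γ (wP * ((C (γ * β ^ 2) - pP) * f)) =
      wP * ((C (γ * (q ^ 2 * β) ^ 2) - pP) * reducedRaiseB β γ f) := by
  simp only [reducedRaiseB, mul_assoc, sub_mul, map_mul, map_sub, scl_wP, scl_C, scl_pP,
    map_C_mul, opV_wP_mul, opV_pP_mul]
  simp only [zpow_neg, zpow_ofNat, ← inv_pow, C_mul, C_pow]
  grind [C_q_mul_C_q_inv]

lemma reducedRaiseB_sub_scl :
    reducedRaiseB β γ f - scl 0 0 0 2 (reducedRaiseB β γ f) =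
      reducedRaiseB β γ (f - scl 0 0 0 2 f)
        + C (β * γ * (q ^ 2 - 1)) * (wP * ((C (γ * β ^ 2) - pP) * f)) := by
  simp only [reducedRaiseB, map_mul, scl_C, map_sub, scl_wP, zpow_ofNat, scl_pP, map_pow, scl_scl,
    add_zero, add_neg_cancel, scl_zero, scl_opV, neg_add_cancel, C_1]
  ring

lemma reducedRaiseC_sub_scl :
    reducedRaiseC β γ f - scl 0 0 0 2 (reducedRaiseC β γ f) =
      C (q ^ 2 * β ^ 3 * γ ^ 2) * (C (q ^ 2) * (wP * (zP * opV (f - scl 0 0 0 2 f)))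
        - C (β * γ) * opX (f - scl 0 0 0 2 f))
      + C (q ^ 4 - 1) * (wP * (zP * reducedRaiseB β γ f))
      - C (q ^ 4) * (wP * (zP * reducedRaiseB β γ (f - scl 0 0 0 2 f))) := by
  simp only [reducedRaiseC, reducedRaiseB, map_sub, map_mul, map_pow, scl_C, scl_wP, zpow_ofNat,
    scl_zP, pow_zero, C_1, one_mul, scl_opV, scl_opX, scl_pP, scl_scl, add_zero, add_neg_cancel,
    scl_zero, neg_add_cancel]
  ring

end Shift

section QPolynomials

variable (b c : ℕ)

lemma q_pow_mul_succ (m n : ℕ) : q ^ (m * (n + 1)) = q ^ m * q ^ (m * n) := by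
  rw [mul_add_one, add_comm, pow_add]

lemma Q_succ_zero_eq_raiseB : Q (b + 1) 0 = raiseB (q ^ (2 * b)) 1 (Q b 0) := by
  simp only [Q, Qb0, raiseB, opD_apply, opE_apply, opV_apply, opX_apply, scl_scl]
  simp only [zpow_mul, zpow_ofNat, zpow_natCast, ← pow_mul, C_pow, one_mul, C_1, mul_one,
    add_zero, zero_add]
  ring

lemma Q_succ_eq_raiseC : Q b (c + 1) = raiseC (q ^ (2 * b)) (q ^ (4 * c)) (Q b c) := by
  simp only [Q, raiseC, raiseB, opD_apply, opE_apply, opV_apply, opX_apply, scl_scl]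
  simp only [zpow_sub₀ q_ne_zero, zpow_add₀ q_ne_zero, div_eq_mul_inv, zpow_mul, zpow_ofNat,
    zpow_natCast, ← inv_pow, pow_right_comm _ _ b, pow_right_comm _ _ c, pow_mul', C_mul, C_pow,
    add_zero, zero_add]
  grind [C_q_mul_C_q_inv]

lemma satisfiesReduction_Q_zero : SatisfiesReduction (q ^ (2 * b)) 1 (Q b 0) := by
  induction b with
  | zero => simpa [Q, Qb0] using satisfiesReduction_one
  | succ b ih =>
    rw [Q_succ_zero_eq_raiseB, ih.raiseB_eq, q_pow_mul_succ]
    exact ih.map_reducedRaiseB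

lemma satisfiesReduction_Q : SatisfiesReduction (q ^ (2 * b)) (q ^ (4 * c)) (Q b c) := by
  induction c with
  | zero => simpa using satisfiesReduction_Q_zero b
  | succ c ih =>
    rw [Q_succ_eq_raiseC, ih.raiseC_eq, q_pow_mul_succ]
    exact ih.map_reducedRaiseC

lemma Q_succ_right : Q b (c + 1) = reducedRaiseC (q ^ (2 * b)) (q ^ (4 * c)) (Q b c) :=
  (Q_succ_eq_raiseC b c).trans (satisfiesReduction_Q b c).raiseC_eq

lemma Q_succ_left : Q (b + 1) c = reducedRaiseB (q ^ (2 * b)) (q ^ (4 * c)) (Q b c) := by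
  induction c with
  | zero => simpa [(satisfiesReduction_Q_zero b).raiseB_eq] using Q_succ_zero_eq_raiseB b
  | succ c ih =>
    rw [Q_succ_right, ih, q_pow_mul_succ, ← reducedRaiseB_reducedRaiseC, ← Q_succ_right,
      ← q_pow_mul_succ]

end QPolynomials

section E35

/-- The term of E35 that lowers `b`; it vanishes for `b = 0`. -/
def bTerm (b c : ℕ) : P4 :=
  C ((q ^ (2 * b) - 1) * q ^ (4 * c)) * (wP * ((C (q ^ (4 * (b + c - 1))) - pP) * Q (b - 1) c))

/-- The term of E35 that raises `b` and lowers `c`; it vanishes for `c = 0`. -/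
def cTerm (b c : ℕ) : P4 :=
  C (q ^ (4 * c) - 1) * (wP * (zP * Q (b + 1) (c - 1)))

lemma bTerm_zero_left (c : ℕ) : bTerm 0 c = 0 := by simp [bTerm]

lemma cTerm_zero_right (b : ℕ) : cTerm b 0 = 0 := by simp [cTerm]

lemma bTerm_succ_left (b c : ℕ) : bTerm (b + 1) c =
    C ((q ^ (2 * (b + 1)) - 1) * q ^ (4 * c)) *
      (wP * ((C (q ^ (4 * c) * (q ^ (2 * b)) ^ 2) - pP) * Q b c)) := by
  have hm : q ^ (4 * (b + 1 + c - 1)) = q ^ (4 * c) * (q ^ (2 * b)) ^ 2 := by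
    rw [show b + 1 + c - 1 = b + c by omega]
    ring
  rw [bTerm, hm, Nat.add_sub_cancel]

lemma cTerm_succ_right (b c : ℕ) :
    cTerm b (c + 1) = C (q ^ 4 * q ^ (4 * c) - 1) * (wP * (zP * Q (b + 1) c)) := by
  rw [cTerm, q_pow_mul_succ, Nat.add_sub_cancel]

variable (b c : ℕ)

lemma reducedRaiseB_bTerm_add :
    reducedRaiseB (q ^ (2 * b)) (q ^ (4 * c)) (bTerm b c)
      + C (q ^ (2 * b) * q ^ (4 * c) * (q ^ 2 - 1)) *
        (wP * ((C (q ^ (4 * c) * (q ^ (2 * b)) ^ 2) - pP) * Q b c)) = bTerm (b + 1) c := by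
  suffices h : reducedRaiseB (q ^ (2 * b)) (q ^ (4 * c)) (bTerm b c) =
      C ((q ^ (2 * b) - 1) * q ^ (4 * c)) *
        (wP * ((C (q ^ (4 * c) * (q ^ (2 * b)) ^ 2) - pP) * Q b c)) by
    rw [h, bTerm_succ_left, ← add_mul, ← C_add]
    ring_nf
  cases b with
  | zero => simp [bTerm_zero_left, reducedRaiseB_zero]
  | succ b =>
    rw [bTerm_succ_left, reducedRaiseB_C_mul, q_pow_mul_succ 2 b,
      reducedRaiseB_wP_mul_sub_pP_mul, ← Q_succ_left]

lemma reducedRaiseB_cTerm :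
    reducedRaiseB (q ^ (2 * b)) (q ^ (4 * c)) (cTerm b c) = cTerm (b + 1) c := by
  cases c with
  | zero => simp [cTerm_zero_right, reducedRaiseB_zero]
  | succ c =>
    rw [cTerm_succ_right, cTerm_succ_right, reducedRaiseB_C_mul, q_pow_mul_succ,
      reducedRaiseB_wP_mul_zP_mul, ← q_pow_mul_succ 2, ← Q_succ_left]

lemma opV_cTerm_sub_opX_cTerm :
    C (q ^ 2 * (q ^ (2 * b)) ^ 3 * (q ^ (4 * c)) ^ 2) *
        (C (q ^ 2) * (wP * (zP * opV (cTerm b c)))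
          - C (q ^ (2 * b) * q ^ (4 * c)) * opX (cTerm b c)) =
      C (q ^ 4) * (wP * (zP * (C (q ^ (4 * c) - 1) * Q (b + 1) c + cTerm (b + 1) c))) := by
  cases c with
  | zero => simp [cTerm_zero_right]
  | succ c =>
    rw [cTerm_succ_right, cTerm_succ_right, Q_succ_right, reducedRaiseC, Q_succ_left (b + 1)]
    simp only [q_pow_mul_succ, map_C_mul, opV_wP_mul, opV_zP_mul, opX_wP_mul, opX_zP_mul]
    simp only [C_mul, C_pow]
    ring

lemma Q_zero_sub_scl_Q_zero : Q 0 c - scl 0 0 0 2 (Q 0 c) = cTerm 0 c := by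
  induction c with
  | zero => simp [Q, Qb0, cTerm_zero_right]
  | succ c ih =>
    rw [Q_succ_right, reducedRaiseC_sub_scl, ih, opV_cTerm_sub_opX_cTerm, reducedRaiseB_cTerm,
      ← Q_succ_left, cTerm_succ_right]
    simp only [C_mul, C_sub, C_1]
    ring

lemma Q_sub_scl_Q : Q b c - scl 0 0 0 2 (Q b c) = bTerm b c + cTerm b c := by
  induction b with
  | zero => rw [Q_zero_sub_scl_Q_zero, bTerm_zero_left, zero_add]
  | succ b ih =>
    rw [Q_succ_left, reducedRaiseB_sub_scl, ih, reducedRaiseB_add, reducedRaiseB_cTerm,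
      add_right_comm, reducedRaiseB_bTerm_add]

end E35

/-- the q-difference equation E35, for `b ≥ 1`, `c ≥ 1`. -/
theorem Q_E35 (b c : ℕ) (hb : 1 ≤ b) (hc : 1 ≤ c) :
    - C (q ^ (4 * c) - 1) * wP * zP * Q (b + 1) (c - 1)
    - scl 0 0 0 2 (Q b c)
    - C ((q ^ (2 * b) - 1) * q ^ (4 * c)) * wP
        * (C (q ^ (4 * (b + c - 1))) - xP * yP ^ 2 * zP) * Q (b - 1) c
    + Q b c = 0 := by
  have h := Q_sub_scl_Q b c
  rw [bTerm, cTerm, pP] at h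
  linear_combination h
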